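/- For every M > 0 there exists a constant C > 0 depending only on M with the following property. Let T > 0 and let h, a, b, f : [1/2, 3/2] × [0, T] → ℝ be continuous, with h twice continuously differentiable in the first variable r and continuously differentiable in the second variable ι, satisfying ∂_ι h(r,ι) = a(r,ι) ∂²_r h(r,ι) + b(r,ι) ∂_r h(r,ι) + f(r,ι), a(r,ι) > 0, and |a(r,ι)| ≤ M, |b(r,ι)| ≤ M throughout the domain. Then for all 3/4 ≤ r ≤ 5/4 and 0 ≤ ι ≤ T: h(r,ι) ≤ max_{1/2 ≤ r' ≤ 3/2} h(r',0) + C·ι·(‖h‖_∞ + ‖f‖_∞), and h(r,ι) ≥ min_{1/2 ≤ r' ≤ 3/2} h(r',0) − C·ι·(‖h‖_∞ + ‖f‖_∞), where ‖·‖_∞ denotes the supremum norm over [1/2, 3/2] × [0, T]. -/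

import Mathlib

open Real Set

/-!
Both bounds come from the maximum principle for the parabolic operator `∂ₜ - a ∂ᵣ² - b ∂ᵣ`. To
bound `h` above at `(r₀, t)`, compare it with the barrier `m + A (r - r₀)² + K t`, where `m` is the
maximum of the initial data. The quadratic term plays the role of the cut-off: if `r₀` has distance
at least `d` from the lateral sides, then with `A = 2 ‖h‖ / d²` it lifts the barrier above `h`
there. As `a` and `b` are bounded by `M`, taking `K` equal to `‖f‖` plus a multiple of `M A` makes
the barrier a supersolution, and at `r = r₀` the barrier is `m + K t`. The lower bound is the upper
bound for `-h`.
-/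

section SupInf

variable {α : Type*} {s : Set α} {g : α → ℝ} {x : α}

-- Over `ℝ` the inner supremum is `0` when `y ∉ s`, so `⨆ y ∈ s, g y` may exceed the supremum of `g`
-- on `s`; likewise `⨅ y ∈ s, g y` may lie below the infimum.
theorem le_biSup_of_bddAbove_image (hg : BddAbove (g '' s)) (hx : x ∈ s) :
    g x ≤ ⨆ y ∈ s, g y :=
  le_ciSup₂ (f := fun y (_ : y ∈ s) => g y)
    (hg.mono <| iUnion_subset fun _ => range_subset_iff.2 <| mem_image_of_mem g) x hx

theorem biInf_le_of_bddBelow_image (hg : BddBelow (g '' s)) (hx : x ∈ s) :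
    ⨅ y ∈ s, g y ≤ g x :=
  ciInf₂_le (f := fun y (_ : y ∈ s) => g y)
    (hg.mono <| iUnion_subset fun _ => range_subset_iff.2 <| mem_image_of_mem g) x hx

end SupInf

section OneVariable

variable {g g₁ g₂ : ℝ → ℝ} {x c : ℝ}

theorem deriv_deriv_nonpos_of_isLocalMax (hmax : IsLocalMax g x) (hg : ContinuousAt g x) :
    deriv (deriv g) x ≤ 0 := by
  by_contra! hpos
  have hmin : IsLocalMin g x := isLocalMin_of_deriv_deriv_pos hpos hmax.deriv_eq_zero hg
  have hconst : g =ᶠ[nhds x] fun _ => g x := by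
    filter_upwards [hmax, hmin] with y hle hge using le_antisymm hle hge
  have hzero : deriv (deriv g) x = 0 := by simpa using hconst.deriv.deriv_eq
  exact hpos.ne' hzero

theorem deriv_nonneg_of_isMaxOn_Icc_right (hcx : c < x) (hg : DifferentiableAt ℝ g x)
    (hmax : IsMaxOn g (Icc c x) x) : 0 ≤ deriv g x := by
  have hcone : c - x ∈ posTangentConeAt (Icc c x) x :=
    sub_mem_posTangentConeAt_of_segment_subset
      (by rw [segment_symm, segment_eq_Icc hcx.le])
  have hdir : (c - x) * deriv g x ≤ 0 := by
    simpa using hmax.localize.hasFDerivWithinAt_nonpos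
      hg.hasDerivAt.hasFDerivAt.hasFDerivWithinAt hcone
  exact nonneg_of_mul_nonpos_right hdir (sub_neg.2 hcx)

theorem deriv_deriv_sub (h₁ : ContDiffAt ℝ 2 g₁ x) (h₂ : ContDiffAt ℝ 2 g₂ x) :
    deriv (deriv fun y => g₁ y - g₂ y) x = deriv (deriv g₁) x - deriv (deriv g₂) x := by
  simpa only [iteratedDeriv_succ, iteratedDeriv_zero] using iteratedDeriv_fun_sub h₁ h₂

end OneVariable

section Parabolic

/-- The points of the space-time rectangle `[x₀, x₁] × [0, T]` at which a parabolic equation is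
imposed: the final time belongs to it, the initial time and the lateral sides do not. -/
def parabolicInterior (x₀ x₁ T : ℝ) : Set (ℝ × ℝ) :=
  Ioo x₀ x₁ ×ˢ Ioc 0 T

/-- The parabolic boundary of `[x₀, x₁] × [0, T]`: the initial segment and the lateral sides. -/
def parabolicBoundary (x₀ x₁ T : ℝ) : Set (ℝ × ℝ) :=
  (Icc x₀ x₁ ×ˢ Icc 0 T) \ parabolicInterior x₀ x₁ T

/-- The parabolic operator `∂ₜ - a ∂ᵣ² - b ∂ᵣ`, acting on functions of position `r` and time `t`.
The derivatives are total, so its value is meaningful only where `u` is regular enough. -/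
noncomputable def parabolicOp (a b u : ℝ → ℝ → ℝ) (r t : ℝ) : ℝ :=
  deriv (u r) t - a r t * deriv (deriv fun s => u s t) r - b r t * deriv (fun s => u s t) r

/-- The regularity of a classical solution of a parabolic equation on `[x₀, x₁] × [0, T]`:
continuity up to the boundary, `C²` in space and differentiability in time on the parabolic
interior. The time derivative is two-sided also at the final time, so `u` lives beyond `T`. -/
structure IsParabolicRegular (x₀ x₁ T : ℝ) (u : ℝ → ℝ → ℝ) : Prop where
  continuousOn : ContinuousOn (fun p : ℝ × ℝ => u p.1 p.2) (Icc x₀ x₁ ×ˢ Icc 0 T)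
  contDiffAt_space : ∀ r t, (r, t) ∈ parabolicInterior x₀ x₁ T → ContDiffAt ℝ 2 (fun s => u s t) r
  differentiableAt_time : ∀ r t, (r, t) ∈ parabolicInterior x₀ x₁ T → DifferentiableAt ℝ (u r) t

/-- The function `m + A (r - r₀)² + K t`, a comparison function for parabolic equations. -/
def parabolicBarrier (m A r₀ K r t : ℝ) : ℝ :=
  m + A * (r - r₀) ^ 2 + K * t

variable {x₀ x₁ T : ℝ} {a b u v : ℝ → ℝ → ℝ}

theorem parabolicInterior_subset : parabolicInterior x₀ x₁ T ⊆ Icc x₀ x₁ ×ˢ Icc 0 T :=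
  prod_mono Ioo_subset_Icc_self Ioc_subset_Icc_self

theorem eq_or_of_mem_parabolicBoundary {r t : ℝ} (h : (r, t) ∈ parabolicBoundary x₀ x₁ T) :
    t = 0 ∨ r = x₀ ∨ r = x₁ := by
  obtain ⟨⟨⟨hx₀, hx₁⟩, ht₀, htT⟩, hnot⟩ := h
  by_contra! hne
  exact hnot ⟨⟨hx₀.lt_of_ne' hne.2.1, hx₁.lt_of_ne hne.2.2⟩, ht₀.lt_of_ne' hne.1, htT⟩

theorem IsParabolicRegular.neg (hu : IsParabolicRegular x₀ x₁ T u) :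
    IsParabolicRegular x₀ x₁ T fun r t => -u r t where
  continuousOn := hu.continuousOn.neg
  contDiffAt_space r t h := (hu.contDiffAt_space r t h).neg
  differentiableAt_time r t h := (hu.differentiableAt_time r t h).neg

theorem IsParabolicRegular.sub (hu : IsParabolicRegular x₀ x₁ T u)
    (hv : IsParabolicRegular x₀ x₁ T v) : IsParabolicRegular x₀ x₁ T fun r t => u r t - v r t where
  continuousOn := hu.continuousOn.sub hv.continuousOn
  contDiffAt_space r t h := (hu.contDiffAt_space r t h).sub (hv.contDiffAt_space r t h)
  differentiableAt_time r t h :=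
    (hu.differentiableAt_time r t h).sub (hv.differentiableAt_time r t h)

theorem isParabolicRegular_parabolicBarrier (m A r₀ K : ℝ) :
    IsParabolicRegular x₀ x₁ T (parabolicBarrier m A r₀ K) where
  continuousOn := by unfold parabolicBarrier; fun_prop
  contDiffAt_space r t _ := by unfold parabolicBarrier; fun_prop
  differentiableAt_time r t _ := by unfold parabolicBarrier; fun_prop

theorem parabolicOp_neg (r t : ℝ) :
    parabolicOp a b (fun r t => -u r t) r t = -parabolicOp a b u r t := by
  simp only [parabolicOp, deriv.fun_neg', deriv.fun_neg]
  ring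

theorem parabolicOp_sub (hu : IsParabolicRegular x₀ x₁ T u) (hv : IsParabolicRegular x₀ x₁ T v)
    {r t : ℝ} (h : (r, t) ∈ parabolicInterior x₀ x₁ T) :
    parabolicOp a b (fun r t => u r t - v r t) r t =
      parabolicOp a b u r t - parabolicOp a b v r t := by
  have hus := hu.contDiffAt_space r t h
  have hvs := hv.contDiffAt_space r t h
  have htime : deriv (fun τ => u r τ - v r τ) t = deriv (u r) t - deriv (v r) t :=
    deriv_fun_sub (hu.differentiableAt_time r t h) (hv.differentiableAt_time r t h)
  have hspace : deriv (fun s => u s t - v s t) r =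
      deriv (fun s => u s t) r - deriv (fun s => v s t) r :=
    deriv_fun_sub (hus.differentiableAt two_ne_zero) (hvs.differentiableAt two_ne_zero)
  rw [parabolicOp, htime, hspace, deriv_deriv_sub hus hvs, parabolicOp, parabolicOp]
  ring

theorem parabolicOp_parabolicBarrier (m A r₀ K r t : ℝ) :
    parabolicOp a b (parabolicBarrier m A r₀ K) r t =
      K - 2 * A * a r t - 2 * A * (r - r₀) * b r t := by
  have htime : deriv (parabolicBarrier m A r₀ K r) t = K := by
    unfold parabolicBarrier
    simp
  have hspace : (deriv fun s => parabolicBarrier m A r₀ K s t) = fun s => 2 * A * (s - r₀) := by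
    funext s
    simp [parabolicBarrier]
    ring
  have hspace₂ : deriv (fun s => 2 * A * (s - r₀)) r = 2 * A := by
    simp
  rw [parabolicOp, htime, hspace, hspace₂]
  ring

theorem parabolicOp_nonneg_of_isMaxOn (hu : IsParabolicRegular x₀ x₁ T u) {r t : ℝ}
    (h : (r, t) ∈ parabolicInterior x₀ x₁ T) (ha : 0 ≤ a r t)
    (hmax : IsMaxOn (fun p : ℝ × ℝ => u p.1 p.2) (Icc x₀ x₁ ×ˢ Icc 0 T) (r, t)) :
    0 ≤ parabolicOp a b u r t := by
  obtain ⟨hr, ht⟩ : r ∈ Ioo x₀ x₁ ∧ t ∈ Ioc 0 T := id h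
  have hlocal : IsLocalMax (fun s => u s t) r := by
    filter_upwards [Icc_mem_nhds hr.1 hr.2] with s hs
    exact hmax (mk_mem_prod hs (Ioc_subset_Icc_self ht))
  have htime : 0 ≤ deriv (u r) t :=
    deriv_nonneg_of_isMaxOn_Icc_right ht.1 (hu.differentiableAt_time r t h) fun τ hτ =>
      hmax (mk_mem_prod (Ioo_subset_Icc_self hr) ⟨hτ.1, hτ.2.trans ht.2⟩)
  have hspace₂ : deriv (deriv fun s => u s t) r ≤ 0 :=
    deriv_deriv_nonpos_of_isLocalMax hlocal (hu.contDiffAt_space r t h).continuousAt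
  rw [parabolicOp, hlocal.deriv_eq_zero, mul_zero, sub_zero]
  linarith [mul_nonpos_of_nonneg_of_nonpos ha hspace₂]

theorem nonpos_of_parabolicOp_neg (hu : IsParabolicRegular x₀ x₁ T u)
    (ha : ∀ r t, (r, t) ∈ parabolicInterior x₀ x₁ T → 0 ≤ a r t)
    (hop : ∀ r t, (r, t) ∈ parabolicInterior x₀ x₁ T → parabolicOp a b u r t < 0)
    (hbdry : ∀ r t, (r, t) ∈ parabolicBoundary x₀ x₁ T → u r t ≤ 0)
    {r t : ℝ} (hrt : (r, t) ∈ Icc x₀ x₁ ×ˢ Icc 0 T) : u r t ≤ 0 := by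
  obtain ⟨⟨ρ, τ⟩, hρτ, hmax⟩ :=
    (isCompact_Icc.prod isCompact_Icc).exists_isMaxOn ⟨(r, t), hrt⟩ hu.continuousOn
  have hnot : (ρ, τ) ∉ parabolicInterior x₀ x₁ T := fun hint =>
    (hop ρ τ hint).not_ge (parabolicOp_nonneg_of_isMaxOn hu hint (ha ρ τ hint) hmax)
  exact (hmax hrt).trans (hbdry ρ τ ⟨hρτ, hnot⟩)

theorem nonpos_of_parabolicOp_nonpos (hu : IsParabolicRegular x₀ x₁ T u)
    (ha : ∀ r t, (r, t) ∈ parabolicInterior x₀ x₁ T → 0 ≤ a r t)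
    (hop : ∀ r t, (r, t) ∈ parabolicInterior x₀ x₁ T → parabolicOp a b u r t ≤ 0)
    (hbdry : ∀ r t, (r, t) ∈ parabolicBoundary x₀ x₁ T → u r t ≤ 0)
    {r t : ℝ} (hrt : (r, t) ∈ Icc x₀ x₁ ×ˢ Icc 0 T) : u r t ≤ 0 := by
  have hperturbed : ∀ ε > 0, u r t ≤ ε * t := by
    intro ε hε
    let w : ℝ → ℝ → ℝ := parabolicBarrier 0 0 0 ε
    have hw_apply : ∀ s τ, w s τ = ε * τ := fun s τ => by simp [w, parabolicBarrier]
    have hw : IsParabolicRegular x₀ x₁ T w := isParabolicRegular_parabolicBarrier 0 0 0 ε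
    have hle : u r t - w r t ≤ 0 := by
      refine nonpos_of_parabolicOp_neg (a := a) (b := b) (hu.sub hw) ha (fun s τ h => ?_)
        (fun s τ h => ?_) hrt
      · rw [parabolicOp_sub hu hw h, parabolicOp_parabolicBarrier]
        linarith [hop s τ h]
      · rw [hw_apply]
        linarith [hbdry s τ h, mul_nonneg hε.le h.1.2.1]
    linarith [hw_apply r t]
  have hlim : Filter.Tendsto (fun ε => ε * t) (nhdsWithin 0 (Ioi 0)) (nhds 0) :=
    ((continuous_mul_const t).tendsto' 0 0 (zero_mul t)).mono_left nhdsWithin_le_nhds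
  exact ge_of_tendsto hlim (eventually_nhdsWithin_of_forall hperturbed)

theorem le_of_parabolicOp_le (hu : IsParabolicRegular x₀ x₁ T u) (hv : IsParabolicRegular x₀ x₁ T v)
    (ha : ∀ r t, (r, t) ∈ parabolicInterior x₀ x₁ T → 0 ≤ a r t)
    (hop : ∀ r t, (r, t) ∈ parabolicInterior x₀ x₁ T →
      parabolicOp a b u r t ≤ parabolicOp a b v r t)
    (hbdry : ∀ r t, (r, t) ∈ parabolicBoundary x₀ x₁ T → u r t ≤ v r t)
    {r t : ℝ} (hrt : (r, t) ∈ Icc x₀ x₁ ×ˢ Icc 0 T) : u r t ≤ v r t := by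
  refine sub_nonpos.1 (nonpos_of_parabolicOp_nonpos (a := a) (b := b) (hu.sub hv) ha
    (fun s τ h => ?_) (fun s τ h => sub_nonpos.2 (hbdry s τ h)) hrt)
  rw [parabolicOp_sub hu hv h]
  exact sub_nonpos.2 (hop s τ h)

end Parabolic

section ShortTime

variable {x₀ x₁ T M d F m : ℝ} {a b u : ℝ → ℝ → ℝ}

theorem le_parabolicOp_parabolicBarrier {A r₀ r t : ℝ} (hA : 0 ≤ A) (hr₀ : r₀ ∈ Icc x₀ x₁)
    (hr : r ∈ Icc x₀ x₁) (ha : a r t ≤ M) (hb : |b r t| ≤ M) :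
    F ≤ parabolicOp a b (parabolicBarrier m A r₀ (2 * A * M * (1 + (x₁ - x₀)) + F)) r t := by
  have hdist : |r - r₀| ≤ x₁ - x₀ := by
    simpa only [dist_eq] using dist_le_of_mem_Icc hr hr₀
  have hdrift : (r - r₀) * b r t ≤ (x₁ - x₀) * M :=
    (le_abs_self _).trans <| (abs_mul _ _).trans_le <|
      mul_le_mul hdist hb (abs_nonneg _) ((abs_nonneg _).trans hdist)
  rw [parabolicOp_parabolicBarrier]
  linarith [mul_le_mul_of_nonneg_left (add_le_add ha hdrift) (mul_nonneg zero_le_two hA)]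

theorem le_parabolicBarrier_of_mem_parabolicBoundary {A K : ℝ} (hA : 0 ≤ A) (hK : 0 ≤ K)
    (hd : 0 ≤ d) (hinit : ∀ r ∈ Icc x₀ x₁, u r 0 ≤ m)
    (hbdry : ∀ r t, (r, t) ∈ parabolicBoundary x₀ x₁ T → u r t ≤ m + A * d ^ 2)
    {r₀ : ℝ} (hr₀ : r₀ ∈ Icc (x₀ + d) (x₁ - d)) {r t : ℝ}
    (h : (r, t) ∈ parabolicBoundary x₀ x₁ T) : u r t ≤ parabolicBarrier m A r₀ K r t := by
  have hlateral : d ^ 2 ≤ (r - r₀) ^ 2 → u r t ≤ parabolicBarrier m A r₀ K r t := fun hsq =>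
    calc u r t ≤ m + A * d ^ 2 := hbdry r t h
      _ ≤ m + A * (r - r₀) ^ 2 := by gcongr
      _ ≤ parabolicBarrier m A r₀ K r t := le_add_of_nonneg_right (mul_nonneg hK h.1.2.1)
  rcases eq_or_of_mem_parabolicBoundary h with rfl | rfl | rfl
  · have hquad : 0 ≤ A * (r - r₀) ^ 2 := by positivity
    rw [parabolicBarrier, mul_zero, add_zero]
    exact (hinit r h.1.1).trans (le_add_of_nonneg_right hquad)
  · exact hlateral ((pow_le_pow_left₀ hd (by linarith [hr₀.1]) 2).trans_eq (sub_sq_comm r₀ r))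
  · exact hlateral (pow_le_pow_left₀ hd (by linarith [hr₀.2]) 2)

theorem le_add_mul_of_parabolicOp_le {A : ℝ} (hM : 0 ≤ M) (hd : 0 ≤ d) (hF : 0 ≤ F) (hA : 0 ≤ A)
    (hu : IsParabolicRegular x₀ x₁ T u)
    (ha : ∀ r t, (r, t) ∈ parabolicInterior x₀ x₁ T → a r t ∈ Icc 0 M)
    (hb : ∀ r t, (r, t) ∈ parabolicInterior x₀ x₁ T → |b r t| ≤ M)
    (hop : ∀ r t, (r, t) ∈ parabolicInterior x₀ x₁ T → parabolicOp a b u r t ≤ F)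
    (hinit : ∀ r ∈ Icc x₀ x₁, u r 0 ≤ m)
    (hbdry : ∀ r t, (r, t) ∈ parabolicBoundary x₀ x₁ T → u r t ≤ m + A * d ^ 2)
    {r t : ℝ} (hr : r ∈ Icc (x₀ + d) (x₁ - d)) (ht : t ∈ Icc 0 T) :
    u r t ≤ m + (2 * A * M * (1 + (x₁ - x₀)) + F) * t := by
  have hrx : r ∈ Icc x₀ x₁ := ⟨by linarith [hr.1], by linarith [hr.2]⟩
  have hwidth : 0 ≤ x₁ - x₀ := sub_nonneg.2 (hrx.1.trans hrx.2)
  have hcompare : u r t ≤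
      parabolicBarrier m A r (2 * A * M * (1 + (x₁ - x₀)) + F) r t :=
    le_of_parabolicOp_le (a := a) (b := b) hu (isParabolicRegular_parabolicBarrier ..)
      (fun ρ τ h => (ha ρ τ h).1)
      (fun ρ τ h => (hop ρ τ h).trans <| le_parabolicOp_parabolicBarrier hA hrx
        (Ioo_subset_Icc_self h.1) (ha ρ τ h).2 (hb ρ τ h))
      (fun ρ τ h => le_parabolicBarrier_of_mem_parabolicBoundary hA (by positivity) hd hinit hbdry
        hr h)
      (mk_mem_prod hrx ht)
  simpa [parabolicBarrier] using hcompare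

theorem le_add_mul_of_abs_le_of_parabolicOp_le {N : ℝ} (hM : 0 ≤ M) (hd : 0 < d)
    (hu : IsParabolicRegular x₀ x₁ T u)
    (ha : ∀ r t, (r, t) ∈ parabolicInterior x₀ x₁ T → a r t ∈ Icc 0 M)
    (hb : ∀ r t, (r, t) ∈ parabolicInterior x₀ x₁ T → |b r t| ≤ M)
    (hF : 0 ≤ F) (hop : ∀ r t, (r, t) ∈ parabolicInterior x₀ x₁ T → parabolicOp a b u r t ≤ F)
    (hN : ∀ r ∈ Icc x₀ x₁, ∀ t ∈ Icc 0 T, |u r t| ≤ N)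
    (hinit : ∀ r ∈ Icc x₀ x₁, u r 0 ≤ m)
    {r t : ℝ} (hr : r ∈ Icc (x₀ + d) (x₁ - d)) (ht : t ∈ Icc 0 T) :
    u r t ≤ m + (4 * M * (1 + (x₁ - x₀)) / d ^ 2 + 1) * t * (N + F) := by
  have hrx : r ∈ Icc x₀ x₁ := ⟨by linarith [hr.1], by linarith [hr.2]⟩
  have hwidth : 0 ≤ x₁ - x₀ := sub_nonneg.2 (hrx.1.trans hrx.2)
  have hN₀ : 0 ≤ N := (abs_nonneg _).trans (hN r hrx t ht)
  have hm : -N ≤ m :=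
    (neg_le_of_abs_le (hN r hrx 0 ⟨le_rfl, ht.1.trans ht.2⟩)).trans (hinit r hrx)
  have hbdry : ∀ ρ τ, (ρ, τ) ∈ parabolicBoundary x₀ x₁ T →
      u ρ τ ≤ m + 2 * N / d ^ 2 * d ^ 2 := by
    intro ρ τ h
    rw [div_mul_cancel₀ _ (by positivity)]
    linarith [le_of_abs_le (hN ρ h.1.1 τ h.1.2)]
  set c := 4 * M * (1 + (x₁ - x₀)) / d ^ 2 with hc
  have hc₀ : 0 ≤ c := by positivity
  calc u r t ≤ m + (2 * (2 * N / d ^ 2) * M * (1 + (x₁ - x₀)) + F) * t :=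
        le_add_mul_of_parabolicOp_le hM hd.le hF (by positivity) hu ha hb hop hinit hbdry hr ht
    _ = m + (c * N + F) * t := by rw [hc]; ring
    _ ≤ m + ((c + 1) * (N + F)) * t := by
        have := ht.1
        gcongr
        linarith [mul_nonneg hc₀ hF]
    _ = m + (c + 1) * t * (N + F) := by ring

theorem sub_mul_le_of_abs_le_of_le_parabolicOp {N : ℝ} (hM : 0 ≤ M) (hd : 0 < d)
    (hu : IsParabolicRegular x₀ x₁ T u)
    (ha : ∀ r t, (r, t) ∈ parabolicInterior x₀ x₁ T → a r t ∈ Icc 0 M)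
    (hb : ∀ r t, (r, t) ∈ parabolicInterior x₀ x₁ T → |b r t| ≤ M)
    (hF : 0 ≤ F) (hop : ∀ r t, (r, t) ∈ parabolicInterior x₀ x₁ T → -F ≤ parabolicOp a b u r t)
    (hN : ∀ r ∈ Icc x₀ x₁, ∀ t ∈ Icc 0 T, |u r t| ≤ N)
    (hinit : ∀ r ∈ Icc x₀ x₁, m ≤ u r 0)
    {r t : ℝ} (hr : r ∈ Icc (x₀ + d) (x₁ - d)) (ht : t ∈ Icc 0 T) :
    m - (4 * M * (1 + (x₁ - x₀)) / d ^ 2 + 1) * t * (N + F) ≤ u r t := by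
  have hneg : -u r t ≤ -m + (4 * M * (1 + (x₁ - x₀)) / d ^ 2 + 1) * t * (N + F) :=
    le_add_mul_of_abs_le_of_parabolicOp_le hM hd hu.neg ha hb hF
      (fun ρ τ h => (parabolicOp_neg ρ τ).trans_le (neg_le.1 (hop ρ τ h)))
      (fun ρ hρ τ hτ => (abs_neg _).trans_le (hN ρ hρ τ hτ))
      (fun ρ hρ => neg_le_neg (hinit ρ hρ)) hr ht
  linarith

end ShortTime

theorem short_time_continuity_general {x₀ x₁ d M : ℝ} (hx : x₀ ≤ x₁) (hd : 0 < d) (hM : 0 ≤ M) :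
    ∃ C : ℝ, 0 < C ∧
      ∀ (T : ℝ) (h a b f : ℝ → ℝ → ℝ),
        IsParabolicRegular x₀ x₁ T h →
        BddAbove ((fun p : ℝ × ℝ => |f p.1 p.2|) '' (Icc x₀ x₁ ×ˢ Icc 0 T)) →
        (∀ r t, (r, t) ∈ parabolicInterior x₀ x₁ T → parabolicOp a b h r t = f r t) →
        (∀ r t, (r, t) ∈ parabolicInterior x₀ x₁ T → a r t ∈ Icc 0 M) →
        (∀ r t, (r, t) ∈ parabolicInterior x₀ x₁ T → |b r t| ≤ M) →
        ∀ r ∈ Icc (x₀ + d) (x₁ - d), ∀ t ∈ Icc 0 T,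
          (h r t ≤ (⨆ r' ∈ Icc x₀ x₁, h r' 0) +
            C * t * ((⨆ p ∈ Icc x₀ x₁ ×ˢ Icc 0 T, |h p.1 p.2|) +
              (⨆ p ∈ Icc x₀ x₁ ×ˢ Icc 0 T, |f p.1 p.2|))) ∧
          ((⨅ r' ∈ Icc x₀ x₁, h r' 0) -
            C * t * ((⨆ p ∈ Icc x₀ x₁ ×ˢ Icc 0 T, |h p.1 p.2|) +
              (⨆ p ∈ Icc x₀ x₁ ×ˢ Icc 0 T, |f p.1 p.2|)) ≤ h r t) := by
  have : 0 ≤ x₁ - x₀ := sub_nonneg.2 hx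
  refine ⟨4 * M * (1 + (x₁ - x₀)) / d ^ 2 + 1, by positivity, ?_⟩
  intro T h a b f hreg hf hop ha hb r hr t ht
  set N := ⨆ p ∈ Icc x₀ x₁ ×ˢ Icc 0 T, |h p.1 p.2|
  set F := ⨆ p ∈ Icc x₀ x₁ ×ˢ Icc 0 T, |f p.1 p.2|
  have hN : ∀ ρ ∈ Icc x₀ x₁, ∀ τ ∈ Icc 0 T, |h ρ τ| ≤ N := fun ρ hρ τ hτ =>
    le_biSup_of_bddAbove_image (g := fun p : ℝ × ℝ => |h p.1 p.2|)
      ((isCompact_Icc.prod isCompact_Icc).bddAbove_image hreg.continuousOn.abs) (mk_mem_prod hρ hτ)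
  have hF : ∀ ρ τ, (ρ, τ) ∈ parabolicInterior x₀ x₁ T → |f ρ τ| ≤ F := fun ρ τ h =>
    le_biSup_of_bddAbove_image (g := fun p : ℝ × ℝ => |f p.1 p.2|) hf
      (parabolicInterior_subset h)
  have hF₀ : 0 ≤ F := iSup_nonneg fun p => iSup_nonneg fun _ => abs_nonneg _
  have hinit : ContinuousOn (fun ρ => h ρ 0) (Icc x₀ x₁) :=
    hreg.continuousOn.comp (by fun_prop) fun ρ hρ =>
      mk_mem_prod hρ ⟨le_rfl, ht.1.trans ht.2⟩
  exact ⟨le_add_mul_of_abs_le_of_parabolicOp_le hM hd hreg ha hb hF₀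
      (fun ρ τ hρτ => (hop ρ τ hρτ).trans_le (le_of_abs_le (hF ρ τ hρτ))) hN
      (fun _ => le_biSup_of_bddAbove_image (isCompact_Icc.bddAbove_image hinit)) hr ht,
    sub_mul_le_of_abs_le_of_le_parabolicOp hM hd hreg ha hb hF₀
      (fun ρ τ hρτ => (neg_le_of_abs_le (hF ρ τ hρτ)).trans_eq (hop ρ τ hρτ).symm) hN
      (fun _ => biInf_le_of_bddBelow_image (isCompact_Icc.bddBelow_image hinit)) hr ht⟩

/-- Short-time continuity estimate for a linear uniformly parabolic equation
`∂_ι h = a ∂²_r h + b ∂_r h + f` on `[1/2,3/2] × [0,T]` with `0 < a` and `|a|, |b| ≤ M`: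
for `3/4 ≤ r ≤ 5/4` and `0 ≤ ι ≤ T`,
`h(r,ι) ≤ max_{r'} h(r',0) + C ι (‖h‖_∞ + ‖f‖_∞)` and
`h(r,ι) ≥ min_{r'} h(r',0) − C ι (‖h‖_∞ + ‖f‖_∞)`, with `C = C(M)`. -/
theorem short_time_continuity (M : ℝ) (hM : 0 < M) :
    ∃ C : ℝ, 0 < C ∧
      ∀ (T : ℝ), 0 < T → ∀ h a b f : ℝ → ℝ → ℝ,
        ContinuousOn (fun p : ℝ × ℝ => h p.1 p.2) (Icc (1/2 : ℝ) (3/2) ×ˢ Icc (0 : ℝ) T) →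
        ContinuousOn (fun p : ℝ × ℝ => a p.1 p.2) (Icc (1/2 : ℝ) (3/2) ×ˢ Icc (0 : ℝ) T) →
        ContinuousOn (fun p : ℝ × ℝ => b p.1 p.2) (Icc (1/2 : ℝ) (3/2) ×ˢ Icc (0 : ℝ) T) →
        ContinuousOn (fun p : ℝ × ℝ => f p.1 p.2) (Icc (1/2 : ℝ) (3/2) ×ˢ Icc (0 : ℝ) T) →
        (∀ ι ∈ Icc (0 : ℝ) T, ContDiff ℝ 2 (fun r : ℝ => h r ι)) →
        (∀ r ∈ Icc (1/2 : ℝ) (3/2), ContDiff ℝ 1 (fun ι : ℝ => h r ι)) →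
        (∀ r ∈ Icc (1/2 : ℝ) (3/2), ∀ ι ∈ Icc (0 : ℝ) T,
          deriv (fun ι' : ℝ => h r ι') ι =
            a r ι * deriv (deriv (fun r' : ℝ => h r' ι)) r +
              b r ι * deriv (fun r' : ℝ => h r' ι) r + f r ι) →
        (∀ r ∈ Icc (1/2 : ℝ) (3/2), ∀ ι ∈ Icc (0 : ℝ) T,
          0 < a r ι ∧ |a r ι| ≤ M ∧ |b r ι| ≤ M) →
        ∀ r ∈ Icc (3/4 : ℝ) (5/4), ∀ ι ∈ Icc (0 : ℝ) T,
          (h r ι ≤ (⨆ r' ∈ Icc (1/2 : ℝ) (3/2), h r' 0) +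
            C * ι * ((⨆ p ∈ Icc (1/2 : ℝ) (3/2) ×ˢ Icc (0 : ℝ) T, |h p.1 p.2|) +
              (⨆ p ∈ Icc (1/2 : ℝ) (3/2) ×ˢ Icc (0 : ℝ) T, |f p.1 p.2|))) ∧
          ((⨅ r' ∈ Icc (1/2 : ℝ) (3/2), h r' 0) -
            C * ι * ((⨆ p ∈ Icc (1/2 : ℝ) (3/2) ×ˢ Icc (0 : ℝ) T, |h p.1 p.2|) +
              (⨆ p ∈ Icc (1/2 : ℝ) (3/2) ×ˢ Icc (0 : ℝ) T, |f p.1 p.2|)) ≤ h r ι) := by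
  obtain ⟨C, hC, hgeneral⟩ := short_time_continuity_general (x₀ := 1 / 2) (x₁ := 3 / 2)
    (d := 1 / 4) (by norm_num) (by norm_num) hM.le
  refine ⟨C, hC, fun T _ h a b f hh _ _ hf hr ht heq hab r hrI => ?_⟩
  have hsub : parabolicInterior (1 / 2) (3 / 2) T ⊆ _ := parabolicInterior_subset
  exact hgeneral T h a b f
    ⟨hh, fun s τ hp => (hr τ (hsub hp).2).contDiffAt,
      fun s τ hp => (ht s (hsub hp).1).differentiable one_ne_zero τ⟩
    ((isCompact_Icc.prod isCompact_Icc).bddAbove_image hf.abs)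
    (fun s τ hp => by rw [parabolicOp, heq s (hsub hp).1 τ (hsub hp).2]; ring)
    (fun s τ hp =>
      have ⟨ha, haM, _⟩ := hab s (hsub hp).1 τ (hsub hp).2
      ⟨ha.le, le_of_abs_le haM⟩)
    (fun s τ hp => (hab s (hsub hp).1 τ (hsub hp).2).2.2)
    r (Icc_subset_Icc (by norm_num) (by norm_num) hrI)
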